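/- arXiv:2210.12955 — 2 statements merged into one kernel-verified Lean document; each statement's English description precedes it below -/
import Mathlib

section
/- Let S be a finite set of replicas with |S| = 3f+1 and F ⊆ S with |F| ≤ f the faulty replicas. Let sent : S → ℕ → Prop model which replica sent an EPOCH-START message carrying which log position, and assume every correct replica sends at most one EPOCH-START for the epoch (for all r ∈ S \ F and all p, q : ℕ, if sent r p and sent r q then p = q). If Q₁, Q₂ ⊆ S are quorums with |Q₁| ≥ 2f+1 and |Q₂| ≥ 2f+1 such that sent r p₁ holds for every r ∈ Q₁ and sent r p₂ holds for every r ∈ Q₂, then p₁ = p₂. Consequently, all correct replicas that begin the epoch (each requiring such an epoch certificate matching its own log position) begin it at the same log position. -/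
section QuorumIntersection

variable {α β : Type*} {S F Q₁ Q₂ : Finset α}

theorem exists_mem_mem_notMem_of_card_add_card_lt (hQ₁ : Q₁ ⊆ S) (hQ₂ : Q₂ ⊆ S)
    (hcard : S.card + F.card < Q₁.card + Q₂.card) :
    ∃ r ∈ Q₁, r ∈ Q₂ ∧ r ∉ F := by
  classical
  have hsdiff : Q₁.card - F.card ≤ (Q₁ \ F).card := Finset.le_card_sdiff F Q₁
  obtain ⟨r, hr⟩ : ((Q₁ \ F) ∩ Q₂).Nonempty :=
    Finset.inter_nonempty_of_card_lt_card_add_card (Finset.sdiff_subset.trans hQ₁) hQ₂ (by omega)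
  obtain ⟨hr₁F, hr₂⟩ := Finset.mem_inter.mp hr
  obtain ⟨hr₁, hrF⟩ := Finset.mem_sdiff.mp hr₁F
  exact ⟨r, hr₁, hr₂, hrF⟩

theorem epoch_start_position_unique_general {sent : α → β → Prop} {p₁ p₂ : β}
    (hhonest : ∀ r ∈ S, r ∉ F → ∀ p q : β, sent r p → sent r q → p = q)
    (hQ₁ : Q₁ ⊆ S) (hQ₂ : Q₂ ⊆ S) (hcard : S.card + F.card < Q₁.card + Q₂.card)
    (hsent₁ : ∀ r ∈ Q₁, sent r p₁) (hsent₂ : ∀ r ∈ Q₂, sent r p₂) :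
    p₁ = p₂ := by
  obtain ⟨r, hr₁, hr₂, hrF⟩ := exists_mem_mem_notMem_of_card_add_card_lt hQ₁ hQ₂ hcard
  exact hhonest r (hQ₁ hr₁) hrF p₁ p₂ (hsent₁ r hr₁) (hsent₂ r hr₂)

end QuorumIntersection

theorem epoch_start_position_unique {α : Type*} [DecidableEq α] (f : ℕ)
    (S F Q₁ Q₂ : Finset α) (sent : α → ℕ → Prop) (p₁ p₂ : ℕ)
    (hS : S.card = 3 * f + 1) (hF : F ⊆ S) (hFcard : F.card ≤ f)
    (hhonest : ∀ r ∈ S, r ∉ F → ∀ p q : ℕ, sent r p → sent r q → p = q)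
    (hQ₁ : Q₁ ⊆ S) (hQ₂ : Q₂ ⊆ S)
    (hc₁ : 2 * f + 1 ≤ Q₁.card) (hc₂ : 2 * f + 1 ≤ Q₂.card)
    (hsent₁ : ∀ r ∈ Q₁, sent r p₁) (hsent₂ : ∀ r ∈ Q₂, sent r p₂) :
    p₁ = p₂ := by
  have hcard : S.card + F.card < Q₁.card + Q₂.card := by omega
  exact epoch_start_position_unique_general hhonest hQ₁ hQ₂ hcard hsent₁ hsent₂
end

section
/- Let S be a finite set of receivers with |S| = 3f+1 and F ⊆ S with |F| ≤ f the faulty receivers. Let V be a type of message digests and confirm : S → ℕ → V → Prop model which receiver broadcast a confirmation for which sequence number and digest, and assume every correct receiver confirms at most one digest per sequence number (for all r ∈ S \ F, all s : ℕ, and all v, w : V, if confirm r s v and confirm r s w then v = w). If for some sequence number s there are quorums Q₁, Q₂ ⊆ S with |Q₁| ≥ 2f+1 and |Q₂| ≥ 2f+1 such that confirm r s m₁ holds for every r ∈ Q₁ and confirm r s m₂ holds for every r ∈ Q₂, then m₁ = m₂. -/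
theorem exists_mem_inter_notMem_of_card_add_card_lt {α : Type*} [DecidableEq α]
    {S F Q₁ Q₂ : Finset α} (hQ₁ : Q₁ ⊆ S) (hQ₂ : Q₂ ⊆ S)
    (hcard : S.card + F.card < Q₁.card + Q₂.card) :
    ∃ r ∈ Q₁ ∩ Q₂, r ∉ F := by
  have hunion : (Q₁ ∪ Q₂).card ≤ S.card := Finset.card_le_card (Finset.union_subset hQ₁ hQ₂)
  have hinter : F.card < (Q₁ ∩ Q₂).card := by
    have := Finset.card_union_add_card_inter Q₁ Q₂
    lia
  exact Finset.exists_mem_notMem_of_card_lt_card hinter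

theorem no_equivocation_per_seqnum_general {α V : Type*} {S F Q₁ Q₂ : Finset α}
    {confirm : α → V → Prop} {m₁ m₂ : V}
    (hhonest : ∀ r ∈ S, r ∉ F → ∀ v w : V, confirm r v → confirm r w → v = w)
    (hQ₁ : Q₁ ⊆ S) (hQ₂ : Q₂ ⊆ S)
    (hcard : S.card + F.card < Q₁.card + Q₂.card)
    (hconf₁ : ∀ r ∈ Q₁, confirm r m₁) (hconf₂ : ∀ r ∈ Q₂, confirm r m₂) :
    m₁ = m₂ := by
  classical
  obtain ⟨r, hr, hrF⟩ := exists_mem_inter_notMem_of_card_add_card_lt hQ₁ hQ₂ hcard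
  obtain ⟨hr₁, hr₂⟩ := Finset.mem_inter.mp hr
  exact hhonest r (hQ₁ hr₁) hrF m₁ m₂ (hconf₁ r hr₁) (hconf₂ r hr₂)

theorem no_equivocation_per_seqnum {α : Type*} [DecidableEq α] {V : Type*} (f : ℕ)
    (S F Q₁ Q₂ : Finset α) (confirm : α → ℕ → V → Prop) (s : ℕ) (m₁ m₂ : V)
    (hS : S.card = 3 * f + 1) (hF : F ⊆ S) (hFcard : F.card ≤ f)
    (hhonest : ∀ r ∈ S, r ∉ F → ∀ s' : ℕ, ∀ v w : V,
      confirm r s' v → confirm r s' w → v = w)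
    (hQ₁ : Q₁ ⊆ S) (hQ₂ : Q₂ ⊆ S)
    (hc₁ : 2 * f + 1 ≤ Q₁.card) (hc₂ : 2 * f + 1 ≤ Q₂.card)
    (hconf₁ : ∀ r ∈ Q₁, confirm r s m₁) (hconf₂ : ∀ r ∈ Q₂, confirm r s m₂) :
    m₁ = m₂ := by
  have hcard : S.card + F.card < Q₁.card + Q₂.card := by lia
  exact no_equivocation_per_seqnum_general (confirm := fun r v ↦ confirm r s v)
    (fun r hr hrF ↦ hhonest r hr hrF s) hQ₁ hQ₂ hcard hconf₁ hconf₂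
end
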